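/- Let q ≡ 0 (mod 3) be a prime power with q ≥ 9, and let ρ ∈ F_q be a non-square. The EA-lines of the twisted cubic C form exactly three orbits under G_q, of sizes q³ − q, (q² − 1)/2 and (q² − 1)/2, namely the orbits of the line ℓ1 through (0:1:0:0) and (0:0:1:1), the line ℓ2 through (0:1:0:0) and (1:0:1:0), and the line ℓ3 through (0:1:0:0) and (1:0:ρ:0), respectively. The stabilizer in G_q of ℓ1 is trivial; ℓ2 and ℓ3 have the same stabilizer in G_q, of order 2q, consisting exactly of the projectivities induced by the matrices with rows (1,0,0,0), (0,d,0,0), (0,−bd,d²,0), (b³,b²d,bd²,d³) with b ∈ F_q, d ∈ {1,−1}. -/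

import Mathlib

open Matrix Submodule

noncomputable section

/-- Row-vector action of an invertible matrix on subspaces of `F^4`:
a projectivity of `PG(3,q)` induced by the matrix. -/
def projAct (F : Type) [Field F] (A : GL (Fin 4) F) :
    Submodule F (Fin 4 → F) → Submodule F (Fin 4 → F) :=
  fun W => W.map (Matrix.vecMulLinear (A : Matrix (Fin 4) (Fin 4) F))

/-- Representative vectors of the points of the twisted cubic. -/
def cubicVecs (F : Type) [Field F] : Set (Fin 4 → F) :=
  {v | (∃ t : F, v = ![t ^ 3, t ^ 2, t, 1]) ∨ v = ![1, 0, 0, 0]}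

/-- The twisted cubic, as a set of projective points (1-dimensional subspaces). -/
def twistedCubic (F : Type) [Field F] : Set (Submodule F (Fin 4 → F)) :=
  (fun v => Submodule.span F {v}) '' cubicVecs F

/-- The group `G_q` of projectivities fixing the twisted cubic, modeled as those maps
on subspaces that are induced by an invertible matrix and map the cubic onto itself. -/
def Gq (F : Type) [Field F] :
    Set ((Submodule F (Fin 4 → F)) → (Submodule F (Fin 4 → F))) :=
  {f | (∃ A : GL (Fin 4) F, f = projAct F A) ∧ f '' twistedCubic F = twistedCubic F}

def isPoint (F : Type) [Field F] (W : Submodule F (Fin 4 → F)) : Prop :=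
  Module.finrank F W = 1

def isLine (F : Type) [Field F] (W : Submodule F (Fin 4 → F)) : Prop :=
  Module.finrank F W = 2

/-- The orbit of a line under `G_q`. -/
def lineOrbit (F : Type) [Field F] (ℓ : Submodule F (Fin 4 → F)) :
    Set (Submodule F (Fin 4 → F)) :=
  {m | ∃ f ∈ Gq F, f ℓ = m}

/-- The stabilizer of a line in `G_q`. -/
def lineStab (F : Type) [Field F] (ℓ : Submodule F (Fin 4 → F)) :
    Set ((Submodule F (Fin 4 → F)) → (Submodule F (Fin 4 → F))) :=
  {f ∈ Gq F | f ℓ = ℓ}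

/-- The linear form `y ↦ c0 y0 + c1 y1 + c2 y2 + c3 y3` defining a plane. -/
def planeForm (F : Type) [Field F] (c : Fin 4 → F) : (Fin 4 → F) →ₗ[F] F where
  toFun y := c 0 * y 0 + c 1 * y 1 + c 2 * y 2 + c 3 * y 3
  map_add' a b := by simp only [Pi.add_apply]; ring
  map_smul' r a := by simp only [Pi.smul_apply, smul_eq_mul, RingHom.id_apply]; ring

/-- The plane `π(c0,c1,c2,c3)`. -/
def planeOf (F : Type) [Field F] (c : Fin 4 → F) : Submodule F (Fin 4 → F) :=
  LinearMap.ker (planeForm F c)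

/-- The null polarity `𝔄`: the polar subspace of `W` w.r.t. the bilinear form
sending a point `(x0:x1:x2:x3)` to the plane `π(x3, −3x2, 3x1, −x0)`. -/
def nullPolarity (F : Type) [Field F] (W : Submodule F (Fin 4 → F)) :
    Submodule F (Fin 4 → F) :=
  ⨅ x ∈ (W : Set (Fin 4 → F)), planeOf F ![x 3, -(3 * x 2), 3 * x 1, -(x 0)]

/-- The tangent line to the twisted cubic at `P(t)`, `t ∈ F`. -/
def tangentAt (F : Type) [Field F] (t : F) : Submodule F (Fin 4 → F) :=
  Submodule.span F {![t ^ 3, t ^ 2, t, 1], ![3 * t ^ 2, 2 * t, 1, 0]}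

/-- The tangent line to the twisted cubic at `P(∞)`. -/
def tangentAtInf (F : Type) [Field F] : Submodule F (Fin 4 → F) :=
  Submodule.span F {![1, 0, 0, 0], ![0, 1, 0, 0]}

def isTangent (F : Type) [Field F] (ℓ : Submodule F (Fin 4 → F)) : Prop :=
  (∃ t : F, ℓ = tangentAt F t) ∨ ℓ = tangentAtInf F

/-- The osculating plane at `P(t)`, `t ∈ F`. -/
def oscPlane (F : Type) [Field F] (t : F) : Submodule F (Fin 4 → F) :=
  planeOf F ![1, -(3 * t), 3 * t ^ 2, -(t ^ 3)]

/-- The osculating plane at `P(∞)`. -/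
def oscPlaneInf (F : Type) [Field F] : Submodule F (Fin 4 → F) :=
  planeOf F ![0, 0, 0, 1]

def isOscPlane (F : Type) [Field F] (π : Submodule F (Fin 4 → F)) : Prop :=
  (∃ t : F, π = oscPlane F t) ∨ π = oscPlaneInf F

/-- A real chord: the line joining two distinct points of the twisted cubic. -/
def isRealChord (F : Type) [Field F] (ℓ : Submodule F (Fin 4 → F)) : Prop :=
  ∃ u ∈ cubicVecs F, ∃ v ∈ cubicVecs F,
    Submodule.span F {u} ≠ Submodule.span F {v} ∧ ℓ = Submodule.span F {u, v}

/-- A real axis: the intersection of two distinct osculating planes. -/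
def isRealAxis (F : Type) [Field F] (ℓ : Submodule F (Fin 4 → F)) : Prop :=
  ∃ π₁ π₂ : Submodule F (Fin 4 → F),
    isOscPlane F π₁ ∧ isOscPlane F π₂ ∧ π₁ ≠ π₂ ∧ ℓ = π₁ ⊓ π₂

/-- The `F_{q²}`-extension of a subspace of `F^4`. -/
def extendSub (F K : Type) [Field F] [Field K] [Algebra F K]
    (W : Submodule F (Fin 4 → F)) : Submodule K (Fin 4 → K) :=
  Submodule.span K ((fun v i => algebraMap F K (v i)) '' (W : Set (Fin 4 → F)))

/-- An external line: a line containing no point of the twisted cubic. -/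
def isExternal (F : Type) [Field F] (ℓ : Submodule F (Fin 4 → F)) : Prop :=
  isLine F ℓ ∧ ∀ P ∈ twistedCubic F, ¬ P ≤ ℓ

/-- An imaginary chord: a line disjoint from the cubic whose `F_{q²}`-extension joins a
pair of Frobenius-conjugate points `P(t)`, `P(t^q)` of the cubic over `F_{q²}`. -/
def isImagChord (F K : Type) [Field F] [Field K] [Algebra F K] (q : ℕ)
    (ℓ : Submodule F (Fin 4 → F)) : Prop :=
  isExternal F ℓ ∧
  ∃ t : K, t ∉ Set.range (algebraMap F K) ∧
    extendSub F K ℓ =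
      Submodule.span K
        ({![t ^ 3, t ^ 2, t, 1], ![(t ^ q) ^ 3, (t ^ q) ^ 2, t ^ q, 1]} :
          Set (Fin 4 → K))

/-- An imaginary axis: a line whose `F_{q²}`-extension is the intersection of a pair of
Frobenius-conjugate osculating planes `π_osc(t)`, `π_osc(t^q)` over `F_{q²}`. -/
def isImagAxis (F K : Type) [Field F] [Field K] [Algebra F K] (q : ℕ)
    (ℓ : Submodule F (Fin 4 → F)) : Prop :=
  isLine F ℓ ∧
  ∃ t : K, t ∉ Set.range (algebraMap F K) ∧
    extendSub F K ℓ =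
      planeOf K ![1, -(3 * t), 3 * t ^ 2, -(t ^ 3)] ⊓
        planeOf K ![1, -(3 * t ^ q), 3 * (t ^ q) ^ 2, -((t ^ q) ^ 3)]

/-- A unisecant: a line meeting the twisted cubic in exactly one point. -/
def isUnisecant (F : Type) [Field F] (ℓ : Submodule F (Fin 4 → F)) : Prop :=
  isLine F ℓ ∧ ∃! P, P ∈ twistedCubic F ∧ P ≤ ℓ

/-- A `UΓ`-line: a non-tangent unisecant lying in some osculating plane. -/
def isUGamma (F : Type) [Field F] (ℓ : Submodule F (Fin 4 → F)) : Prop :=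
  isUnisecant F ℓ ∧ ¬ isTangent F ℓ ∧ ∃ π, isOscPlane F π ∧ ℓ ≤ π

/-- A `UnΓ`-line: a non-tangent unisecant lying in no osculating plane. -/
def isUnGamma (F : Type) [Field F] (ℓ : Submodule F (Fin 4 → F)) : Prop :=
  isUnisecant F ℓ ∧ ¬ isTangent F ℓ ∧ ∀ π, isOscPlane F π → ¬ ℓ ≤ π

/-- An `EΓ`-line: an external line, other than an imaginary chord, lying in some
osculating plane. -/
def isEGamma (F K : Type) [Field F] [Field K] [Algebra F K] (q : ℕ)
    (ℓ : Submodule F (Fin 4 → F)) : Prop :=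
  isExternal F ℓ ∧ ¬ isImagChord F K q ℓ ∧ ∃ π, isOscPlane F π ∧ ℓ ≤ π

/-- For `q ≡ 0 (mod 3)`: the axis of `Γ`, the line `x0 = x3 = 0`. -/
def axisLine (F : Type) [Field F] : Submodule F (Fin 4 → F) :=
  Submodule.span F {![0, 1, 0, 0], ![0, 0, 1, 0]}

/-- For `q ≡ 0 (mod 3)`: an `EA`-line, i.e. an external line, other than an imaginary
chord and other than the axis of `Γ`, meeting the axis of `Γ`. -/
def isEA (F K : Type) [Field F] [Field K] [Algebra F K] (q : ℕ)
    (ℓ : Submodule F (Fin 4 → F)) : Prop :=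
  isExternal F ℓ ∧ ¬ isImagChord F K q ℓ ∧ ℓ ≠ axisLine F ∧ ℓ ⊓ axisLine F ≠ ⊥

end


section helpers
variable {F : Type} [Field F]

def cM (g : Matrix (Fin 2) (Fin 2) F) : Matrix (Fin 4) (Fin 4) F :=
  !![g 0 0 ^ 3, g 0 0 ^ 2 * g 1 0, g 0 0 * g 1 0 ^ 2, g 1 0 ^ 3;
     3 * g 0 0 ^ 2 * g 0 1, g 0 0 ^ 2 * g 1 1 + 2 * g 0 0 * g 0 1 * g 1 0,
       g 0 1 * g 1 0 ^ 2 + 2 * g 0 0 * g 1 0 * g 1 1, 3 * g 1 0 ^ 2 * g 1 1;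
     3 * g 0 0 * g 0 1 ^ 2, g 0 1 ^ 2 * g 1 0 + 2 * g 0 0 * g 0 1 * g 1 1,
       g 0 0 * g 1 1 ^ 2 + 2 * g 0 1 * g 1 0 * g 1 1, 3 * g 1 0 * g 1 1 ^ 2;
     g 0 1 ^ 3, g 0 1 ^ 2 * g 1 1, g 0 1 * g 1 1 ^ 2, g 1 1 ^ 3]

def cP (x y : F) : Fin 4 → F := ![x ^ 3, x ^ 2 * y, x * y ^ 2, y ^ 3]

theorem vm4 (v : Fin 4 → F) (A : Matrix (Fin 4) (Fin 4) F) :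
    v ᵥ* A = fun j => v 0 * A 0 j + v 1 * A 1 j + v 2 * A 2 j + v 3 * A 3 j := by
  funext j
  simp [Matrix.vecMul, dotProduct, Fin.sum_univ_four]

theorem cP_vecMul (x y : F) (g : Matrix (Fin 2) (Fin 2) F) :
    cP x y ᵥ* cM g = cP (g 0 0 * x + g 0 1 * y) (g 1 0 * x + g 1 1 * y) := by
  rw [vm4]
  funext j
  fin_cases j <;> simp [cP, cM] <;> ring

theorem cM_one : cM (1 : Matrix (Fin 2) (Fin 2) F) = 1 := by
  ext i j
  fin_cases i <;> fin_cases j <;> simp [cM]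

theorem cM_mul (g h : Matrix (Fin 2) (Fin 2) F) : cM (g * h) = cM h * cM g := by
  ext i j
  fin_cases i <;> fin_cases j <;>
    simp [cM, Matrix.mul_apply, Fin.sum_univ_four, Fin.sum_univ_two] <;> ring

theorem cM_smul (k : F) (g : Matrix (Fin 2) (Fin 2) F) : cM (k • g) = k ^ 3 • cM g := by
  ext i j
  fin_cases i <;> fin_cases j <;> simp [cM] <;> ring

def cGL (g : GL (Fin 2) F) : GL (Fin 4) F where
  val := cM g
  inv := cM (g⁻¹ : GL (Fin 2) F)
  val_inv := by rw [← cM_mul, ← Units.val_mul]; simp [cM_one]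
  inv_val := by rw [← cM_mul, ← Units.val_mul]; simp [cM_one]

theorem cGL_val (g : GL (Fin 2) F) : ((cGL g : GL (Fin 4) F) : Matrix (Fin 4) (Fin 4) F) = cM g := rfl

theorem cGL_mul (g h : GL (Fin 2) F) : cGL (g * h) = cGL h * cGL g := by
  apply Units.ext
  simp [cGL_val, cM_mul]

theorem cGL_one : cGL (1 : GL (Fin 2) F) = 1 := by
  apply Units.ext
  simp [cGL_val, cM_one]

theorem projAct_mul (A B : GL (Fin 4) F) (W : Submodule F (Fin 4 → F)) :
    projAct F (A * B) W = projAct F B (projAct F A W) := by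
  unfold projAct
  rw [← Submodule.map_comp]
  congr 1
  refine LinearMap.ext fun v => ?_
  simp

theorem projAct_one (W : Submodule F (Fin 4 → F)) :
    projAct F (1 : GL (Fin 4) F) W = W := by
  unfold projAct
  convert Submodule.map_id W
  ext v : 2
  simp

theorem projAct_smul (A B : GL (Fin 4) F) (k : F) (hk : k ≠ 0)
    (h : (A : Matrix (Fin 4) (Fin 4) F) = k • (B : Matrix (Fin 4) (Fin 4) F)) :
    projAct F A = projAct F B := by
  funext W
  unfold projAct
  rw [h]
  ext v
  simp only [Submodule.mem_map, Matrix.vecMulLinear_apply, Matrix.vecMul_smul]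
  constructor
  · rintro ⟨y, hy, rfl⟩
    exact ⟨k • y, W.smul_mem _ hy, by simp [Matrix.smul_vecMul]⟩
  · rintro ⟨y, hy, rfl⟩
    exact ⟨k⁻¹ • y, W.smul_mem _ hy, by simp [Matrix.smul_vecMul, hk]⟩

theorem projAct_span (A : GL (Fin 4) F) (s : Set (Fin 4 → F)) :
    projAct F A (span F s) = span F ((fun v => v ᵥ* (A : Matrix (Fin 4) (Fin 4) F)) '' s) := by
  unfold projAct
  rw [Submodule.map_span]; rfl

theorem projAct_inj (A : GL (Fin 4) F) : Function.Injective (projAct F A) := by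
  intro U V h
  have := congrArg (projAct F A⁻¹) h
  rwa [← projAct_mul, ← projAct_mul, mul_inv_cancel, projAct_one, projAct_one] at this

theorem vecMul_inj (A : GL (Fin 4) F) : Function.Injective
    (fun v : Fin 4 → F => v ᵥ* (A : Matrix (Fin 4) (Fin 4) F)) := by
  intro u v h
  have := congrArg (fun w => w ᵥ* ((A⁻¹ : GL (Fin 4) F) : Matrix (Fin 4) (Fin 4) F)) h
  simpa [Matrix.vecMul_vecMul, ← Units.val_mul] using this

theorem projAct_finrank (A : GL (Fin 4) F) (W : Submodule F (Fin 4 → F)) :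
    Module.finrank F (projAct F A W) = Module.finrank F W := by
  unfold projAct
  exact (Submodule.equivMapOfInjective
    (Matrix.vecMulLinear (A : Matrix (Fin 4) (Fin 4) F)) (vecMul_inj A) W).finrank_eq.symm

theorem cP_ne (x y : F) (h : ¬ (x = 0 ∧ y = 0)) : cP x y ≠ 0 := by
  intro h0
  have h1 := congrFun h0 0
  have h2 := congrFun h0 3
  simp [cP] at h1 h2
  exact h ⟨h1, h2⟩

theorem span_smul_eq' (k : F) (hk : k ≠ 0) (v : Fin 4 → F) : span F {k • v} = span F {v} :=
  Submodule.span_singleton_smul_eq (IsUnit.mk0 k hk) v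

theorem mem_tc (S : Submodule F (Fin 4 → F)) : S ∈ twistedCubic F ↔
    ∃ x y : F, ¬ (x = 0 ∧ y = 0) ∧ S = span F {cP x y} := by
  constructor
  · rintro ⟨v, (⟨t, rfl⟩ | rfl), rfl⟩
    · exact ⟨t, 1, by simp, by simp [cP]⟩
    · exact ⟨1, 0, by simp, by simp [cP]⟩
  · rintro ⟨x, y, h, rfl⟩
    by_cases hy : y = 0
    · subst hy
      have hx : x ≠ 0 := by tauto
      refine ⟨![1, 0, 0, 0], Or.inr rfl, ?_⟩
      have : cP x 0 = x ^ 3 • ![1, 0, 0, 0] := by simp [cP]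
      rw [this, span_smul_eq' _ (pow_ne_zero _ hx)]
    · refine ⟨_, Or.inl ⟨x / y, rfl⟩, ?_⟩
      have : cP x y = y ^ 3 • ![(x / y) ^ 3, (x / y) ^ 2, x / y, 1] := by
        simp only [cP, smul_cons, smul_eq_mul, smul_empty, mul_one]
        field_simp
      rw [this, span_smul_eq' _ (pow_ne_zero _ hy)]

theorem cGL_mem_Gq (g : GL (Fin 2) F) : projAct F (cGL g) ∈ Gq F := by
  have key : ∀ g : GL (Fin 2) F, ∀ S ∈ twistedCubic F, projAct F (cGL g) S ∈ twistedCubic F := by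
    intro g S hS
    obtain ⟨x, y, h, rfl⟩ := (mem_tc _).1 hS
    rw [projAct_span]
    simp only [Set.image_singleton, cGL_val, cP_vecMul]
    refine (mem_tc _).2 ⟨_, _, ?_, rfl⟩
    rintro ⟨h1, h2⟩
    have h3 : cP x y ᵥ* (cGL g : Matrix (Fin 4) (Fin 4) F) = 0 := by
      rw [cGL_val, cP_vecMul, h1, h2]
      ext j; fin_cases j <;> simp [cP]
    have := vecMul_inj (cGL g) (a₁ := cP x y) (a₂ := 0) (by simpa using h3)
    exact cP_ne x y h this
  refine ⟨⟨_, rfl⟩, ?_⟩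
  ext S
  constructor
  · rintro ⟨T, hT, rfl⟩
    exact key g T hT
  · intro hS
    refine ⟨_, key g⁻¹ S hS, ?_⟩
    rw [← projAct_mul, ← cGL_mul, mul_inv_cancel, cGL_one, projAct_one]

theorem poly_zero [Fintype F] (hq : 9 ≤ Fintype.card F) (c0 c1 c2 c3 c4 c5 : F)
    (h : ∀ t : F, c0 + c1 * t + c2 * t ^ 2 + c3 * t ^ 3 + c4 * t ^ 4 + c5 * t ^ 5 = 0) :
    c0 = 0 ∧ c1 = 0 ∧ c2 = 0 ∧ c3 = 0 ∧ c4 = 0 ∧ c5 = 0 := by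
  classical
  let p : Polynomial F := ∑ i : Fin 6, Polynomial.monomial (i : ℕ) (![c0, c1, c2, c3, c4, c5] i)
  have hp : p = 0 := by
    apply Polynomial.eq_zero_of_natDegree_lt_card_of_eval_eq_zero' p Finset.univ
    · intro t _
      rw [← h t]
      simp [p, Fin.sum_univ_succ, Polynomial.eval_add]
      ring
    · have : p.natDegree ≤ 5 := by
        apply Polynomial.natDegree_sum_le_of_forall_le
        intro i _
        refine (Polynomial.natDegree_monomial_le _).trans (by omega)
      rw [Finset.card_univ]; omega
  have hc : ∀ n, p.coeff n = 0 := by intro n; rw [hp]; simp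
  have h0 := hc 0
  have h1 := hc 1
  have h2 := hc 2
  have h3 := hc 3
  have h4 := hc 4
  have h5 := hc 5
  simp [p, Fin.sum_univ_succ, Polynomial.coeff_monomial] at h0 h1 h2 h3 h4 h5
  exact ⟨h0, h1, h2, h3, h4, h5⟩

theorem diag_form [Fintype F] (hq : 9 ≤ Fintype.card F) (B : GL (Fin 4) F)
    (h0 : ∃ k : F, cP 1 0 ᵥ* (B : Matrix (Fin 4) (Fin 4) F) = k • cP 1 0)
    (h3 : ∃ k : F, cP 0 1 ᵥ* (B : Matrix (Fin 4) (Fin 4) F) = k • cP 0 1)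
    (ht : ∀ t : F, ∃ k x y : F, cP t 1 ᵥ* (B : Matrix (Fin 4) (Fin 4) F) = k • cP x y) :
    ∃ (k : F) (g : GL (Fin 2) F), k ≠ 0 ∧
      (B : Matrix (Fin 4) (Fin 4) F) = k • (cGL g : Matrix (Fin 4) (Fin 4) F) := by
  obtain ⟨α, h0⟩ := h0
  obtain ⟨δ, h3⟩ := h3
  have hdet : (B : Matrix (Fin 4) (Fin 4) F).det ≠ 0 := by
    have := (Matrix.isUnit_iff_isUnit_det _).1 B.isUnit
    exact this.ne_zero
  set A : Matrix (Fin 4) (Fin 4) F := (B : Matrix (Fin 4) (Fin 4) F) with hA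
  rw [vm4] at h0 h3
  have a00 := congrFun h0 0
  have a01 := congrFun h0 1
  have a02 := congrFun h0 2
  have a03 := congrFun h0 3
  have a30 := congrFun h3 0
  have a31 := congrFun h3 1
  have a32 := congrFun h3 2
  have a33 := congrFun h3 3
  simp [cP] at a00 a01 a02 a03 a30 a31 a32 a33
  have e : ∀ t : F, ∀ v : Fin 4 → F, v = cP t 1 ᵥ* A →
      v 0 * v 2 = v 1 ^ 2 ∧ v 1 * v 3 = v 2 ^ 2 := by
    intro t v hv
    obtain ⟨k, x, y, h⟩ := ht t
    rw [hv, h]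
    simp [cP]
    constructor <;> ring
  have p1 := poly_zero hq 0 0 (A 2 0 * A 2 2 - A 2 1 ^ 2)
    (A 1 0 * A 2 2 + A 2 0 * A 1 2 - 2 * A 1 1 * A 2 1)
    (α * A 2 2 + A 1 0 * A 1 2 - A 1 1 ^ 2) (α * A 1 2) (by
      intro t
      have := (e t _ rfl).1
      rw [vm4] at this
      simp [cP, a00, a01, a02, a03, a30, a31, a32, a33] at this
      linear_combination this)
  have p2 := poly_zero hq 0 (A 2 1 * δ) (A 1 1 * δ + A 2 1 * A 2 3 - A 2 2 ^ 2)
    (A 1 1 * A 2 3 + A 2 1 * A 1 3 - 2 * A 1 2 * A 2 2) (A 1 1 * A 1 3 - A 1 2 ^ 2) 0 (by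
      intro t
      have := (e t _ rfl).2
      rw [vm4] at this
      simp [cP, a00, a01, a02, a03, a30, a31, a32, a33] at this
      linear_combination this)
  obtain ⟨-, -, p12, p13, p14, p15⟩ := p1
  obtain ⟨-, p21, p22, p23, p24, -⟩ := p2
  have hα : α ≠ 0 := by
    intro h
    apply hdet
    apply Matrix.det_eq_zero_of_row_eq_zero 0
    intro j
    fin_cases j <;> simp [a00, a01, a02, a03, h]
  have hδ : δ ≠ 0 := by
    intro h
    apply hdet
    apply Matrix.det_eq_zero_of_row_eq_zero 3
    intro j
    fin_cases j <;> simp [a30, a31, a32, a33, h]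
  have z12 : A 1 2 = 0 := by simpa [hα] using p15
  have z21 : A 2 1 = 0 := by simpa [hδ] using p21
  have z22 : A 2 2 ≠ 0 := by
    intro h
    apply hdet
    apply Matrix.det_eq_zero_of_column_eq_zero 2
    intro j
    fin_cases j <;> simp [a02, z12, h, a32]
  have z20 : A 2 0 = 0 := by simpa [z21, z22] using p12
  have z10 : A 1 0 = 0 := by simpa [z21, z22, z12] using p13
  simp only [z12, z21, z20, z10] at p14 p22 p23 p24
  have hb : A 1 1 ≠ 0 := by
    intro h
    rw [h] at p14
    simp [hα, z22] at p14
  have z23 : A 2 3 = 0 := by simpa [hb] using p23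
  have z13 : A 1 3 = 0 := by simpa [hb] using p24
  have hu : IsUnit (!![A 2 2 / δ, 0; 0, 1] : Matrix (Fin 2) (Fin 2) F) := by
    rw [Matrix.isUnit_iff_isUnit_det]
    simp [Matrix.det_fin_two, z22, hδ]
  refine ⟨δ, hu.unit, hδ, ?_⟩
  rw [cGL_val]
  have q1 : A 1 1 = A 2 2 ^ 2 / δ := by field_simp; linear_combination p22
  have q0 : α = A 2 2 ^ 3 / δ ^ 2 := by
    have : α = A 1 1 ^ 2 / A 2 2 := by field_simp; linear_combination p14
    rw [this, q1]; field_simp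
  ext i j
  fin_cases i <;> fin_cases j <;>
    simp [cM, a00, a01, a02, a03, a30, a31, a32, a33, z12, z21, z20, z10, z23, z13]
  · rw [q0]; field_simp
  · rw [q1]; field_simp
  · field_simp

theorem Gq_class [Fintype F] (hq : 9 ≤ Fintype.card F)
    (f : Submodule F (Fin 4 → F) → Submodule F (Fin 4 → F)) (hf : f ∈ Gq F) :
    ∃ g : GL (Fin 2) F, f = projAct F (cGL g) := by
  obtain ⟨⟨A, rfl⟩, hA⟩ := hf
  have key : ∀ x y : F, ¬ (x = 0 ∧ y = 0) → ∃ k a b : F, k ≠ 0 ∧ ¬ (a = 0 ∧ b = 0) ∧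
      cP x y ᵥ* (A : Matrix (Fin 4) (Fin 4) F) = k • cP a b := by
    intro x y h
    have : projAct F A (span F {cP x y}) ∈ twistedCubic F := by
      rw [← hA]; exact ⟨_, (mem_tc _).2 ⟨x, y, h, rfl⟩, rfl⟩
    obtain ⟨a, b, hab, h2⟩ := (mem_tc _).1 this
    rw [projAct_span, Set.image_singleton] at h2
    have h3 : cP x y ᵥ* (A : Matrix (Fin 4) (Fin 4) F) ∈ span F {cP a b} := by
      rw [← h2]; exact Submodule.mem_span_singleton_self _
    obtain ⟨k, hk⟩ := Submodule.mem_span_singleton.1 h3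
    refine ⟨k, a, b, ?_, hab, hk.symm⟩
    rintro rfl
    have := vecMul_inj A (a₁ := cP x y) (a₂ := 0) (by simpa using hk.symm)
    exact cP_ne x y h this
  obtain ⟨k1, a, c, hk1, hac, h1⟩ := key 1 0 (by simp)
  obtain ⟨k2, b, d, hk2, hbd, h2⟩ := key 0 1 (by simp)
  have hdet : a * d - b * c ≠ 0 := by
    intro h
    have : ∃ r s : F, ¬ (r = 0 ∧ s = 0) ∧ r • cP a c = s • cP b d := by
      by_cases ha : a = 0
      · have hc : c ≠ 0 := by tauto
        have hb : b = 0 := by simpa [ha, hc] using h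
        refine ⟨d ^ 3, c ^ 3, by simp [hc], ?_⟩
        subst ha hb
        simp [cP]; ring
      · refine ⟨b ^ 3, a ^ 3, by simp [ha], ?_⟩
        have hd : d = b * c / a := by field_simp; linear_combination h
        subst hd
        funext j
        fin_cases j <;> simp [cP] <;> field_simp
    obtain ⟨r, s, hrs, h3⟩ := this
    have h4 : ((r / k1) • cP 1 0) ᵥ* (A : Matrix (Fin 4) (Fin 4) F) =
        ((s / k2) • cP 0 1) ᵥ* (A : Matrix (Fin 4) (Fin 4) F) := by
      rw [Matrix.smul_vecMul, Matrix.smul_vecMul, h1, h2, smul_smul, smul_smul,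
        div_mul_cancel₀ _ hk1, div_mul_cancel₀ _ hk2, h3]
    have h5 := vecMul_inj A h4
    have h6 := congrFun h5 0
    have h7 := congrFun h5 3
    simp [cP, hk1] at h6 h7
    exact hrs ⟨h6, by field_simp at h7; simpa using h7.symm⟩
  have hu : IsUnit (!![a, b; c, d] : Matrix (Fin 2) (Fin 2) F) := by
    rw [Matrix.isUnit_iff_isUnit_det]
    simpa [Matrix.det_fin_two] using hdet
  obtain ⟨g, hg⟩ := hu
  have i1 : cP a c = cP 1 0 ᵥ* (cGL g : Matrix (Fin 4) (Fin 4) F) := by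
    rw [cGL_val, cP_vecMul, hg]; simp
  have i2 : cP b d = cP 0 1 ᵥ* (cGL g : Matrix (Fin 4) (Fin 4) F) := by
    rw [cGL_val, cP_vecMul, hg]; simp
  have hinv : ∀ v : Fin 4 → F, v ᵥ* (cGL g : Matrix (Fin 4) (Fin 4) F) ᵥ*
      (cGL g⁻¹ : Matrix (Fin 4) (Fin 4) F) = v := by
    intro v
    rw [Matrix.vecMul_vecMul, ← Units.val_mul, ← cGL_mul, inv_mul_cancel, cGL_one]; simp
  obtain ⟨k, g', hk, hB⟩ := diag_form hq (A * cGL g⁻¹)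
    ⟨k1, by rw [Units.val_mul, ← Matrix.vecMul_vecMul, h1, i1, Matrix.smul_vecMul, hinv]⟩
    ⟨k2, by rw [Units.val_mul, ← Matrix.vecMul_vecMul, h2, i2, Matrix.smul_vecMul, hinv]⟩
    (by
      intro t
      obtain ⟨k, x, y, -, -, h⟩ := key t 1 (by simp)
      refine ⟨k, (g⁻¹ : GL (Fin 2) F) 0 0 * x + (g⁻¹ : GL (Fin 2) F) 0 1 * y,
        (g⁻¹ : GL (Fin 2) F) 1 0 * x + (g⁻¹ : GL (Fin 2) F) 1 1 * y, ?_⟩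
      rw [Units.val_mul, ← Matrix.vecMul_vecMul, h, Matrix.smul_vecMul, cGL_val, cP_vecMul])
  have hB' := projAct_smul _ _ k hk hB
  refine ⟨g * g', ?_⟩
  funext W
  rw [cGL_mul, projAct_mul, ← hB', ← projAct_mul, mul_assoc, ← cGL_mul, mul_inv_cancel, cGL_one,
    mul_one]

end helpers

section helpers2
variable {F : Type} [Field F]

instance gAct : MulAction (GL (Fin 2) F) (Submodule F (Fin 4 → F)) where
  smul g W := projAct F (cGL g) W
  one_smul W := by
    change projAct F (cGL 1) W = W
    rw [cGL_one, projAct_one]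
  mul_smul g h W := by
    change projAct F (cGL (g * h)) W = projAct F (cGL g) (projAct F (cGL h) W)
    rw [cGL_mul, projAct_mul]

theorem gAct_def (g : GL (Fin 2) F) (W : Submodule F (Fin 4 → F)) :
    g • W = projAct F (cGL g) W := rfl

theorem lineOrbit_eq [Fintype F] (hq : 9 ≤ Fintype.card F) (ℓ : Submodule F (Fin 4 → F)) :
    lineOrbit F ℓ = MulAction.orbit (GL (Fin 2) F) ℓ := by
  ext m
  constructor
  · rintro ⟨f, hf, rfl⟩
    obtain ⟨g, rfl⟩ := Gq_class hq f hf
    exact ⟨g, rfl⟩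
  · rintro ⟨g, rfl⟩
    exact ⟨_, cGL_mem_Gq g, rfl⟩

theorem lineStab_eq [Fintype F] (hq : 9 ≤ Fintype.card F) (ℓ : Submodule F (Fin 4 → F)) :
    lineStab F ℓ = (fun g : GL (Fin 2) F => projAct F (cGL g)) '' {g | g • ℓ = ℓ} := by
  ext f
  constructor
  · rintro ⟨hf, h⟩
    obtain ⟨g, rfl⟩ := Gq_class hq f hf
    exact ⟨g, h, rfl⟩
  · rintro ⟨g, hg, rfl⟩
    exact ⟨cGL_mem_Gq g, hg⟩

def mkG (a b c d : F) (h : a * d - b * c ≠ 0) : GL (Fin 2) F :=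
  Matrix.GeneralLinearGroup.mkOfDetNeZero !![a, b; c, d] (by rwa [Matrix.det_fin_two_of])

theorem mkG_val (a b c d : F) (h : a * d - b * c ≠ 0) :
    ((mkG a b c d h : GL (Fin 2) F) : Matrix (Fin 2) (Fin 2) F) = !![a, b; c, d] := rfl

theorem gl_det (g : GL (Fin 2) F) : g 0 0 * g 1 1 - g 0 1 * g 1 0 ≠ 0 := by
  have := ((Matrix.isUnit_iff_isUnit_det _).1 g.isUnit).ne_zero
  rwa [Matrix.det_fin_two] at this

theorem finrank_pair (u v : Fin 4 → F) (h : ∀ s t : F, s • u + t • v = 0 → s = 0 ∧ t = 0) :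
    Module.finrank F (span F ({u, v} : Set (Fin 4 → F))) = 2 := by
  have := finrank_span_eq_card (LinearIndependent.pair_iff.2 h)
  rw [Matrix.range_cons_cons_empty] at this
  simpa using this

theorem smul_eq_of (g : GL (Fin 2) F) (ℓ W : Submodule F (Fin 4 → F))
    (h1 : Module.finrank F ℓ = 2) (h2 : Module.finrank F W = 2) (u v : Fin 4 → F)
    (hu : u ∈ ℓ) (hv : v ∈ ℓ) (h : ∀ s t : F, s • u + t • v = 0 → s = 0 ∧ t = 0) :
    g • ℓ = W ↔ u ᵥ* cM (g : Matrix (Fin 2) (Fin 2) F) ∈ W ∧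
      v ᵥ* cM (g : Matrix (Fin 2) (Fin 2) F) ∈ W := by
  have hℓ : span F {u, v} = ℓ := by
    apply Submodule.eq_of_le_of_finrank_eq
    · rw [Submodule.span_le]
      rintro x (rfl | rfl)
      · exact hu
      · exact hv
    · rw [finrank_pair u v h, h1]
  have e : g • ℓ = span F {u ᵥ* cM (g : Matrix (Fin 2) (Fin 2) F),
      v ᵥ* cM (g : Matrix (Fin 2) (Fin 2) F)} := by
    rw [← hℓ, gAct_def, projAct_span, Set.image_pair, cGL_val]
  constructor
  · rintro h
    rw [← h, e]
    exact ⟨Submodule.subset_span (by simp), Submodule.subset_span (by simp)⟩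
  · rintro ⟨ha, hb⟩
    apply Submodule.eq_of_le_of_finrank_eq
    · rw [e, Submodule.span_le]
      rintro x (rfl | rfl)
      · exact ha
      · exact hb
    · rw [gAct_def, projAct_finrank, h1, h2]

theorem mem_L1 (v : Fin 4 → F) :
    v ∈ span F ({![0, 1, 0, 0], ![0, 0, 1, 1]} : Set (Fin 4 → F)) ↔ v 0 = 0 ∧ v 2 = v 3 := by
  rw [Submodule.mem_span_pair]
  constructor
  · rintro ⟨a, b, rfl⟩
    simp
  · rintro ⟨h1, h2⟩
    refine ⟨v 1, v 2, ?_⟩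
    ext j; fin_cases j <;> simp [h1, h2]

theorem mem_LR (r : F) (v : Fin 4 → F) :
    v ∈ span F ({![0, 1, 0, 0], ![1, 0, r, 0]} : Set (Fin 4 → F)) ↔
      v 3 = 0 ∧ v 2 = r * v 0 := by
  rw [Submodule.mem_span_pair]
  constructor
  · rintro ⟨a, b, rfl⟩
    simp [mul_comm]
  · rintro ⟨h1, h2⟩
    refine ⟨v 1, v 0, ?_⟩
    ext j; fin_cases j <;> simp [h1, h2, mul_comm]

theorem mem_ax (v : Fin 4 → F) : v ∈ axisLine F ↔ v 0 = 0 ∧ v 3 = 0 := by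
  unfold axisLine
  rw [Submodule.mem_span_pair]
  constructor
  · rintro ⟨a, b, rfl⟩
    simp
  · rintro ⟨h1, h2⟩
    refine ⟨v 1, v 2, ?_⟩
    ext j; fin_cases j <;> simp [h1, h2]

theorem ind_L1 (s t : F) (h : s • (![0, 1, 0, 0] : Fin 4 → F) + t • ![0, 0, 1, 1] = 0) :
    s = 0 ∧ t = 0 := by
  have h1 := congrFun h 1
  have h2 := congrFun h 2
  simp at h1 h2
  exact ⟨h1, h2⟩

theorem ind_LR (r s t : F) (h : s • (![0, 1, 0, 0] : Fin 4 → F) + t • ![1, 0, r, 0] = 0) :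
    s = 0 ∧ t = 0 := by
  have h1 := congrFun h 1
  have h2 := congrFun h 0
  simp at h1 h2
  exact ⟨h1, h2⟩

theorem ind_ax (s t : F) (h : s • (![0, 1, 0, 0] : Fin 4 → F) + t • ![0, 0, 1, 0] = 0) :
    s = 0 ∧ t = 0 := by
  have h1 := congrFun h 1
  have h2 := congrFun h 2
  simp at h1 h2
  exact ⟨h1, h2⟩

theorem fr_L1 : Module.finrank F
    (span F ({![0, 1, 0, 0], ![0, 0, 1, 1]} : Set (Fin 4 → F))) = 2 :=
  finrank_pair _ _ ind_L1

theorem fr_LR (r : F) : Module.finrank F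
    (span F ({![0, 1, 0, 0], ![1, 0, r, 0]} : Set (Fin 4 → F))) = 2 :=
  finrank_pair _ _ (ind_LR r)

theorem fr_ax : Module.finrank F (axisLine F) = 2 :=
  finrank_pair _ _ ind_ax

theorem vM (h3 : (3 : F) = 0) (v : Fin 4 → F) (g : Matrix (Fin 2) (Fin 2) F) :
    v ᵥ* cM g = ![v 0 * g 0 0 ^ 3 + v 3 * g 0 1 ^ 3,
      v 0 * (g 0 0 ^ 2 * g 1 0) + v 1 * (g 0 0 * (g 0 0 * g 1 1 - g 0 1 * g 1 0))
        - v 2 * (g 0 1 * (g 0 0 * g 1 1 - g 0 1 * g 1 0)) + v 3 * (g 0 1 ^ 2 * g 1 1),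
      v 0 * (g 0 0 * g 1 0 ^ 2) - v 1 * (g 1 0 * (g 0 0 * g 1 1 - g 0 1 * g 1 0))
        + v 2 * (g 1 1 * (g 0 0 * g 1 1 - g 0 1 * g 1 0)) + v 3 * (g 0 1 * g 1 1 ^ 2),
      v 0 * g 1 0 ^ 3 + v 3 * g 1 1 ^ 3] := by
  rw [vm4]
  funext j
  fin_cases j <;> simp [cM, h3]
  · linear_combination (v 1 * g 0 0 * g 0 1 * g 1 0 + v 2 * (g 0 0 * g 0 1 * g 1 1)) * h3
  · linear_combination (v 1 * g 0 0 * g 1 0 * g 1 1 + v 2 * (g 0 1 * g 1 0 * g 1 1)) * h3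

theorem L1_smul (h3 : (3 : F) = 0) (g : GL (Fin 2) F) :
    g • span F ({![0, 1, 0, 0], ![0, 0, 1, 1]} : Set (Fin 4 → F)) =
      span F ({![0, 1, 0, 0], ![0, 0, 1, 1]} : Set (Fin 4 → F)) ↔
    g 1 0 = 0 ∧ g 0 1 = 0 ∧ g 0 0 = g 1 1 := by
  rw [smul_eq_of g _ _ fr_L1 fr_L1 ![0, 1, 0, 0] ![0, 0, 1, 1]
    (Submodule.subset_span (by simp)) (Submodule.subset_span (by simp)) ind_L1]
  have hd := gl_det g
  rw [mem_L1, mem_L1, vM h3, vM h3]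
  simp [hd, -and_congr_right_iff]
  constructor
  · rintro ⟨hc, hb, h⟩
    rw [hc, hb] at hd h
    have : g 1 1 ≠ 0 := by rintro h; simp [h] at hd
    refine ⟨hc, hb, ?_⟩
    simp at h
    have h' : g 1 1 ^ 2 * (g 0 0 - g 1 1) = 0 := by linear_combination h
    simpa [this, sub_eq_zero] using h'
  · rintro ⟨hc, hb, h⟩
    simp [hc, hb, h]; ring

theorem LR_smul (h3 : (3 : F) = 0) (g : GL (Fin 2) F) (r r' : F) :
    g • span F ({![0, 1, 0, 0], ![1, 0, r, 0]} : Set (Fin 4 → F)) =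
      span F ({![0, 1, 0, 0], ![1, 0, r', 0]} : Set (Fin 4 → F)) ↔
    g 1 0 = 0 ∧ r * g 1 1 ^ 2 = r' * g 0 0 ^ 2 := by
  rw [smul_eq_of g _ _ (fr_LR r) (fr_LR r') ![0, 1, 0, 0] ![1, 0, r, 0]
    (Submodule.subset_span (by simp)) (Submodule.subset_span (by simp)) (ind_LR r)]
  have hd := gl_det g
  rw [mem_LR, mem_LR, vM h3, vM h3]
  simp [hd, -and_congr_right_iff]
  constructor
  · rintro ⟨hc, h⟩
    rw [hc] at hd h
    have : g 0 0 ≠ 0 := by rintro h; simp [h] at hd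
    refine ⟨hc, ?_⟩
    simp at h
    have h' : g 0 0 * (r * g 1 1 ^ 2 - r' * g 0 0 ^ 2) = 0 := by linear_combination h
    simpa [this, sub_eq_zero] using h'
  · rintro ⟨hc, h⟩
    simp [hc]
    linear_combination g 0 0 * h

theorem char3 [Fintype F] (h : Fintype.card F % 3 = 0) : (3 : F) = 0 := by
  obtain ⟨p, hp⟩ := CharP.exists F
  obtain ⟨n, hpp, hn⟩ := FiniteField.card F p
  have h3 : 3 ∣ p ^ (n : ℕ) := by rw [← hn]; omega
  have := (Nat.prime_dvd_prime_iff_eq Nat.prime_three hpp).1 (Nat.prime_three.dvd_of_dvd_pow h3)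
  subst this
  exact_mod_cast CharP.cast_eq_zero F 3

theorem neg_ne' (h3 : (3 : F) = 0) (a : F) (ha : a ≠ 0) : -a ≠ a := by
  intro h
  apply ha
  linear_combination a * h3 + h

theorem cube_surj [Finite F] (h3 : (3 : F) = 0) (w : F) : ∃ x : F, x ^ 3 = w := by
  have : Function.Injective (fun x : F => x ^ 3) := by
    intro x y h
    have : (x - y) ^ 3 = 0 := by
      simp only at h
      linear_combination h + (-x ^ 2 * y + x * y ^ 2) * h3
    exact sub_eq_zero.1 (by simpa using this)
  exact (Finite.injective_iff_surjective.1 this) w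

def EA' (ℓ : Submodule F (Fin 4 → F)) : Prop :=
  isExternal F ℓ ∧ ℓ ≠ axisLine F ∧ ∃ v ∈ ℓ, v ∈ axisLine F ∧ v ≠ 0

theorem isEA_iff (h3 : (3 : F) = 0) (K : Type) [Field K] [Algebra F K] (q : ℕ)
    (ℓ : Submodule F (Fin 4 → F)) : isEA F K q ℓ ↔ EA' ℓ := by
  have e : ℓ ⊓ axisLine F ≠ ⊥ ↔ ∃ v ∈ ℓ, v ∈ axisLine F ∧ v ≠ 0 := by
    rw [Submodule.ne_bot_iff]
    simp [Submodule.mem_inf, and_assoc]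
  unfold isEA EA'
  rw [e]
  constructor
  · rintro ⟨h1, -, h2⟩
    exact ⟨h1, h2⟩
  · rintro ⟨h1, h2, v, hv, hva, hv0⟩
    refine ⟨h1, ?_, h2, v, hv, hva, hv0⟩
    rintro ⟨-, t, -, h⟩
    have hm : (fun i => algebraMap F K (v i)) ∈ extendSub F K ℓ :=
      Submodule.subset_span ⟨v, hv, rfl⟩
    rw [h] at hm
    generalize t ^ q = s at hm
    obtain ⟨a, b, hab⟩ := Submodule.mem_span_pair.1 hm
    obtain ⟨z0, z3⟩ := (mem_ax v).1 hva
    have e0 := congrFun hab 0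
    have e1 := congrFun hab 1
    have e2 := congrFun hab 2
    have e3 := congrFun hab 3
    simp [z0, z3] at e0 e1 e2 e3
    have k3 : (3 : K) = 0 := by
      have := congrArg (algebraMap F K) h3
      simpa only [map_ofNat, map_zero] using this
    have hb : b = -a := by linear_combination e3
    subst hb
    have h5 : a * (t - s) = 0 := by
      have : (t - s) ^ 3 * a = 0 := by
        linear_combination e0 + (-t ^ 2 * s + t * s ^ 2) * a * k3
      rcases mul_eq_zero.1 this with h | h
      · have : t - s = 0 := by simpa using h
        rw [this]; simp
      · rw [h]; simp
    apply hv0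
    have z1 : v 1 = 0 := by
      apply (algebraMap F K).injective
      rw [← e1, map_zero]
      linear_combination (t + s) * h5
    have z2 : v 2 = 0 := by
      apply (algebraMap F K).injective
      rw [← e2, map_zero]
      linear_combination h5
    ext j
    fin_cases j <;> simp [z0, z1, z2, z3]

theorem ax_smul (h3 : (3 : F) = 0) (g : GL (Fin 2) F) : g • axisLine F = axisLine F := by
  rw [smul_eq_of g _ _ fr_ax fr_ax ![0, 1, 0, 0] ![0, 0, 1, 0]
    (Submodule.subset_span (by simp)) (Submodule.subset_span (by simp)) ind_ax]
  rw [mem_ax, mem_ax, vM h3, vM h3]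
  simp

theorem smul_mem_smul' (g : GL (Fin 2) F) (ℓ : Submodule F (Fin 4 → F)) (v : Fin 4 → F)
    (hv : v ∈ ℓ) : v ᵥ* cM (g : Matrix (Fin 2) (Fin 2) F) ∈ g • ℓ :=
  ⟨v, hv, rfl⟩

theorem EA'_smul (h3 : (3 : F) = 0) (g : GL (Fin 2) F) (ℓ : Submodule F (Fin 4 → F))
    (h : EA' ℓ) : EA' (g • ℓ) := by
  obtain ⟨⟨h1, h2⟩, hn, v, hv, hva, hv0⟩ := h
  refine ⟨⟨?_, ?_⟩, ?_, v ᵥ* cM (g : Matrix (Fin 2) (Fin 2) F), smul_mem_smul' g ℓ v hv, ?_, ?_⟩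
  · unfold isLine
    rw [gAct_def, projAct_finrank]; exact h1
  · intro P hP hle
    apply h2 (g⁻¹ • P)
    · have := (cGL_mem_Gq g⁻¹).2
      rw [← this]
      exact ⟨P, hP, rfl⟩
    · have : g⁻¹ • P ≤ g⁻¹ • (g • ℓ) := Submodule.map_mono hle
      rwa [inv_smul_smul] at this
  · intro h
    apply hn
    rw [← ax_smul h3 g] at h
    exact MulAction.injective g h
  · rw [← ax_smul h3 g]
    exact smul_mem_smul' g _ v hva
  · intro h
    apply hv0
    apply vecMul_inj (cGL g)
    simpa [cGL_val] using h

theorem EA'_L1 : EA' (span F ({![0, 1, 0, 0], ![0, 0, 1, 1]} : Set (Fin 4 → F))) := by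
  refine ⟨⟨fr_L1, ?_⟩, ?_, ![0, 1, 0, 0], by simp [mem_L1], by simp [mem_ax], ?_⟩
  · intro P hP hle
    obtain ⟨x, y, hxy, rfl⟩ := (mem_tc _).1 hP
    have := hle (Submodule.mem_span_singleton_self _)
    rw [mem_L1] at this
    simp [cP] at this
    obtain ⟨rfl, h⟩ := this
    have h : y = 0 := by simpa using h.symm
    exact hxy ⟨rfl, h⟩
  · intro h
    have : (![0, 0, 1, 1] : Fin 4 → F) ∈ axisLine F := by rw [← h, mem_L1]; simp
    simp [mem_ax] at this
  · intro h
    simpa using congrFun h 1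

theorem EA'_LR (r : F) (hr : r ≠ 0) :
    EA' (span F ({![0, 1, 0, 0], ![1, 0, r, 0]} : Set (Fin 4 → F))) := by
  refine ⟨⟨fr_LR r, ?_⟩, ?_, ![0, 1, 0, 0], by simp [mem_LR], by simp [mem_ax], ?_⟩
  · intro P hP hle
    obtain ⟨x, y, hxy, rfl⟩ := (mem_tc _).1 hP
    have := hle (Submodule.mem_span_singleton_self _)
    rw [mem_LR] at this
    simp [cP] at this
    obtain ⟨rfl, h⟩ := this
    simp [hr] at h
    exact hxy ⟨h, rfl⟩
  · intro h
    have : (![1, 0, r, 0] : Fin 4 → F) ∈ axisLine F := by rw [← h, mem_LR]; simp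
    simp [mem_ax] at this
  · intro h
    simpa using congrFun h 1

theorem sq_ratio [Fintype F] (ρ w : F) (hw : w ≠ 0) (hρ : ¬ ∃ s : F, s ^ 2 = ρ)
    (hn : ¬ ∃ s : F, s ^ 2 = w) : ∃ s : F, s ≠ 0 ∧ s ^ 2 * w = ρ := by
  classical
  have hρ0 : ρ ≠ 0 := by rintro rfl; exact hρ ⟨0, by simp⟩
  have c2 : ringChar F ≠ 2 := by
    intro h
    obtain ⟨s, hs⟩ := FiniteField.isSquare_of_char_two h ρ
    exact hρ ⟨s, by rw [hs]; ring⟩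
  have a1 : quadraticChar F ρ = -1 := by
    rw [quadraticChar_neg_one_iff_not_isSquare]
    rintro ⟨s, hs⟩
    exact hρ ⟨s, by rw [hs]; ring⟩
  have a2 : quadraticChar F w = -1 := by
    rw [quadraticChar_neg_one_iff_not_isSquare]
    rintro ⟨s, hs⟩
    exact hn ⟨s, by rw [hs]; ring⟩
  have a3 : quadraticChar F (ρ * w) = 1 := by rw [map_mul, a1, a2]; norm_num
  obtain ⟨s, hs⟩ := (quadraticChar_one_iff_isSquare (mul_ne_zero hρ0 hw)).1 a3
  have hs0 : s ≠ 0 := by rintro rfl; simp [hρ0, hw] at hs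
  refine ⟨s / w, div_ne_zero hs0 hw, ?_⟩
  field_simp
  linear_combination -hs

theorem stepB [Fintype F] (h3 : (3 : F) = 0) (ρ : F) (hρ : ¬ ∃ s : F, s ^ 2 = ρ)
    (ℓ : Submodule F (Fin 4 → F)) (h : EA' ℓ) (w : Fin 4 → F) (hw : w ∈ ℓ) (w0 : w 0 = 1)
    (w3 : w 3 = 0) : ∃ g : GL (Fin 2) F,
      g • ℓ = span F ({![0, 1, 0, 0], ![0, 0, 1, 1]} : Set (Fin 4 → F)) ∨
      g • ℓ = span F ({![0, 1, 0, 0], ![1, 0, 1, 0]} : Set (Fin 4 → F)) ∨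
      g • ℓ = span F ({![0, 1, 0, 0], ![1, 0, ρ, 0]} : Set (Fin 4 → F)) := by
  obtain ⟨⟨h1, h2⟩, hn, v, hv, hva, hv0⟩ := h
  obtain ⟨v0, v3⟩ := (mem_ax v).1 hva
  have ind : ∀ s t : F, s • v + t • w = 0 → s = 0 ∧ t = 0 := by
    intro s t h
    have e := congrFun h 0
    simp [v0, w0] at e
    subst e
    simp [hv0] at h
    exact ⟨h, rfl⟩
  have hinf : (![1, 0, 0, 0] : Fin 4 → F) ∉ ℓ := by
    intro h
    apply h2 (span F {![1, 0, 0, 0]}) ⟨_, Or.inr rfl, rfl⟩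
    rw [Submodule.span_le]
    simpa using h
  by_cases z2 : v 2 = 0
  · have z1 : v 1 ≠ 0 := by
      intro z1
      apply hv0
      ext j; fin_cases j <;> simp [v0, z1, z2, v3]
    have hw2 : w 2 ≠ 0 := by
      intro hw2
      apply hinf
      have := ℓ.sub_mem hw (ℓ.smul_mem (w 1 / v 1) hv)
      convert this using 1
      ext j; fin_cases j <;> simp [v0, z1, z2, v3, w0, w3, hw2]
    have main : ∀ d r : F, d ≠ 0 → d ^ 2 * w 2 = r → ∃ g : GL (Fin 2) F,
        g • ℓ = span F ({![0, 1, 0, 0], ![1, 0, r, 0]} : Set (Fin 4 → F)) := by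
      intro d r hd hr
      refine ⟨mkG 1 0 0 d (by simpa using hd), ?_⟩
      rw [smul_eq_of _ ℓ _ h1 (fr_LR r) v w hv hw ind, mem_LR, mem_LR, vM h3, vM h3, mkG_val]
      simp [v0, z2, v3, w0, w3]
      linear_combination hr
    by_cases hs : ∃ s : F, s ^ 2 = w 2
    · obtain ⟨s, hs⟩ := hs
      have hs0 : s ≠ 0 := by rintro rfl; apply hw2; rw [← hs]; simp
      obtain ⟨g, hg⟩ := main (1 / s) 1 (by simpa using hs0) (by rw [← hs]; field_simp)
      exact ⟨g, Or.inr (Or.inl hg)⟩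
    · obtain ⟨s, hs0, hs⟩ := sq_ratio ρ (w 2) hw2 hρ hs
      obtain ⟨g, hg⟩ := main s ρ hs0 hs
      exact ⟨g, Or.inr (Or.inr hg)⟩
  · have hw1 : w 1 - v 1 / v 2 * w 2 ≠ 0 := by
      intro hw1
      apply hinf
      have := ℓ.sub_mem hw (ℓ.smul_mem (w 2 / v 2) hv)
      convert this using 1
      ext j; fin_cases j <;> simp [v0, z2, v3, w0, w3]
      linear_combination - hw1
    refine ⟨mkG 0 (1 / (w 1 - v 1 / v 2 * w 2)) 1 (v 1 / v 2) (by simpa using hw1), Or.inl ?_⟩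
    rw [smul_eq_of _ ℓ _ h1 fr_L1 v w hv hw ind, mem_L1, mem_L1, vM h3, vM h3, mkG_val]
    generalize hD : w 1 - v 1 / v 2 * w 2 = D at *
    simp [v0, v3, w0, w3]
    constructor
    · field_simp; ring
    · field_simp
      rw [← hD]; field_simp; ring

theorem EA'_class [Fintype F] (h3 : (3 : F) = 0) (ρ : F) (hρ : ¬ ∃ s : F, s ^ 2 = ρ)
    (ℓ : Submodule F (Fin 4 → F)) (h : EA' ℓ) : ∃ g : GL (Fin 2) F,
      g • ℓ = span F ({![0, 1, 0, 0], ![0, 0, 1, 1]} : Set (Fin 4 → F)) ∨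
      g • ℓ = span F ({![0, 1, 0, 0], ![1, 0, 1, 0]} : Set (Fin 4 → F)) ∨
      g • ℓ = span F ({![0, 1, 0, 0], ![1, 0, ρ, 0]} : Set (Fin 4 → F)) := by
  have : ∃ w ∈ ℓ, w ∉ axisLine F := by
    by_contra! hc
    apply h.2.1
    exact Submodule.eq_of_le_of_finrank_eq hc (by rw [fr_ax]; exact h.1.1)
  obtain ⟨w, hw, hwa⟩ := this
  obtain ⟨x, hx⟩ := cube_surj h3 (w 0)
  obtain ⟨y, hy⟩ := cube_surj h3 (w 3)
  have hxy : ¬ (x = 0 ∧ y = 0) := by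
    rintro ⟨rfl, rfl⟩
    apply hwa
    rw [mem_ax, ← hx, ← hy]; simp
  have : ∃ a b : F, a * x + b * y = 1 := by
    by_cases hx0 : x = 0
    · have hy0 : y ≠ 0 := by tauto
      exact ⟨0, 1 / y, by field_simp; ring⟩
    · exact ⟨1 / x, 0, by field_simp; ring⟩
  obtain ⟨a, b, hab⟩ := this
  let g := mkG a b (-y) x (by rw [show a * x - b * -y = 1 by linear_combination hab]; simp)
  obtain ⟨g', hg'⟩ := stepB h3 ρ hρ (g • ℓ) (EA'_smul h3 g ℓ h) _ (smul_mem_smul' g ℓ w hw)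
    (by
      rw [vM h3, mkG_val]
      simp [← hx, ← hy]
      have : (a * x + b * y) ^ 3 = 1 := by rw [hab]; simp
      linear_combination this - (a ^ 2 * x ^ 2 * b * y + a * x * b ^ 2 * y ^ 2) * h3)
    (by
      rw [vM h3, mkG_val]
      simp [← hx, ← hy]
      ring)
  refine ⟨g' * g, ?_⟩
  simpa [mul_smul] using hg'

theorem card_GL2 [Fintype F] : Nat.card (GL (Fin 2) F) =
    (Fintype.card F ^ 2 - 1) * (Fintype.card F ^ 2 - Fintype.card F) := by
  rw [Matrix.card_GL_field]
  simp [Fin.prod_univ_two]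

theorem gl_ext (g h : GL (Fin 2) F) (h00 : g 0 0 = h 0 0) (h01 : g 0 1 = h 0 1)
    (h10 : g 1 0 = h 1 0) (h11 : g 1 1 = h 1 1) : g = h := by
  apply Units.ext
  ext i j
  fin_cases i <;> fin_cases j <;> simp [*]

theorem card_stab1 [Fintype F] (h3 : (3 : F) = 0) :
    Nat.card (MulAction.stabilizer (GL (Fin 2) F)
      (span F ({![0, 1, 0, 0], ![0, 0, 1, 1]} : Set (Fin 4 → F)))) = Fintype.card F - 1 := by
  classical
  rw [← Fintype.card_units, ← Nat.card_eq_fintype_card]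
  symm
  apply Nat.card_eq_of_bijective (fun u : Fˣ => (⟨mkG u 0 0 u (by simp), by
    rw [MulAction.mem_stabilizer_iff, L1_smul h3, mkG_val]; simp⟩ :
    MulAction.stabilizer (GL (Fin 2) F)
      (span F ({![0, 1, 0, 0], ![0, 0, 1, 1]} : Set (Fin 4 → F)))))
  constructor
  · intro u v h
    have := congrArg (fun z => (z.1 : Matrix (Fin 2) (Fin 2) F) 0 0) h
    simp [mkG_val] at this
    exact Units.ext this
  · rintro ⟨g, hg⟩
    rw [MulAction.mem_stabilizer_iff, L1_smul h3] at hg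
    obtain ⟨hc, hb, h⟩ := hg
    have hd := gl_det g
    have h0 : g 0 0 ≠ 0 := by intro h0; rw [h0, hc] at hd; simp at hd
    refine ⟨Units.mk0 _ h0, Subtype.ext (gl_ext _ _ ?_ ?_ ?_ ?_)⟩ <;> simp [mkG_val, hc, hb, h]

theorem card_stabR [Fintype F] (h3 : (3 : F) = 0) (r : F) (hr : r ≠ 0) :
    Nat.card (MulAction.stabilizer (GL (Fin 2) F)
      (span F ({![0, 1, 0, 0], ![1, 0, r, 0]} : Set (Fin 4 → F)))) =
      (Fintype.card F - 1) * (Fintype.card F * 2) := by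
  classical
  have e : (Fintype.card F - 1) * (Fintype.card F * 2) = Nat.card (Fˣ × F × Bool) := by
    rw [Nat.card_prod, Nat.card_prod, Nat.card_eq_fintype_card, Nat.card_eq_fintype_card,
      Fintype.card_units]
    simp
  rw [e]
  symm
  apply Nat.card_eq_of_bijective (fun u : Fˣ × F × Bool =>
    (⟨mkG u.1 u.2.1 0 (if u.2.2 then u.1 else -u.1) (by split_ifs <;> simp), by
    rw [MulAction.mem_stabilizer_iff, LR_smul h3, mkG_val]; simp⟩ :
    MulAction.stabilizer (GL (Fin 2) F)
      (span F ({![0, 1, 0, 0], ![1, 0, r, 0]} : Set (Fin 4 → F)))))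
  constructor
  · rintro ⟨u, b, s⟩ ⟨u', b', s'⟩ h
    have e1 := congrArg (fun z => (z.1 : Matrix (Fin 2) (Fin 2) F) 0 0) h
    have e2 := congrArg (fun z => (z.1 : Matrix (Fin 2) (Fin 2) F) 0 1) h
    have e3 := congrArg (fun z => (z.1 : Matrix (Fin 2) (Fin 2) F) 1 1) h
    simp [mkG_val] at e1 e2 e3
    have e1 := Units.ext e1
    subst e1 e2
    have := neg_ne' h3 u u.ne_zero
    cases s <;> cases s'
    · rfl
    · exact absurd e3 this
    · exact absurd e3.symm this
    · rfl
  · rintro ⟨g, hg⟩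
    rw [MulAction.mem_stabilizer_iff, LR_smul h3] at hg
    obtain ⟨hc, h⟩ := hg
    have hd := gl_det g
    have h0 : g 0 0 ≠ 0 := by intro h0; rw [h0, hc] at hd; simp at hd
    have h' : g 1 1 ^ 2 = g 0 0 ^ 2 := mul_left_cancel₀ hr h
    rcases sq_eq_sq_iff_eq_or_eq_neg.1 h' with h' | h'
    · refine ⟨⟨Units.mk0 _ h0, g 0 1, true⟩, Subtype.ext (gl_ext _ _ ?_ ?_ ?_ ?_)⟩ <;>
        simp [mkG_val, hc, h']
    · refine ⟨⟨Units.mk0 _ h0, g 0 1, false⟩, Subtype.ext (gl_ext _ _ ?_ ?_ ?_ ?_)⟩ <;>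
        simp [mkG_val, hc, h']

theorem orbit_card [Fintype F] (ℓ : Submodule F (Fin 4 → F)) :
    Nat.card (MulAction.stabilizer (GL (Fin 2) F) ℓ) * (MulAction.orbit (GL (Fin 2) F) ℓ).ncard =
    (Fintype.card F ^ 2 - 1) * (Fintype.card F ^ 2 - Fintype.card F) := by
  rw [← card_GL2, ← MulAction.index_stabilizer, Subgroup.card_mul_index]

theorem arith1 (q N : ℕ) (hq : 9 ≤ q) (h : (q - 1) * N = (q ^ 2 - 1) * (q ^ 2 - q)) :
    N = q ^ 3 - q := by
  obtain ⟨n, rfl⟩ : ∃ n, q = n + 1 := ⟨q - 1, by omega⟩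
  have e1 : (n + 1) ^ 2 - 1 = n * (n + 2) := by
    rw [Nat.sub_eq_iff_eq_add (by nlinarith)]; ring
  have e2 : (n + 1) ^ 2 - (n + 1) = n * (n + 1) := by
    rw [Nat.sub_eq_iff_eq_add (by nlinarith)]; ring
  have e3 : (n + 1) ^ 3 - (n + 1) = n * (n + 1) * (n + 2) := by
    have : (n + 1) ^ 3 = n * (n + 1) * (n + 2) + (n + 1) := by ring
    omega
  rw [e1, e2, Nat.add_sub_cancel] at h
  rw [e3]
  apply Nat.eq_of_mul_eq_mul_left (show 0 < n by omega)
  rw [h]; ring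

theorem arith2 (q N : ℕ) (hq : 9 ≤ q)
    (h : (q - 1) * (q * 2) * N = (q ^ 2 - 1) * (q ^ 2 - q)) : 2 * N = q ^ 2 - 1 := by
  obtain ⟨n, rfl⟩ : ∃ n, q = n + 1 := ⟨q - 1, by omega⟩
  have e1 : (n + 1) ^ 2 - 1 = n * (n + 2) := by
    rw [Nat.sub_eq_iff_eq_add (by nlinarith)]; ring
  have e2 : (n + 1) ^ 2 - (n + 1) = n * (n + 1) := by
    rw [Nat.sub_eq_iff_eq_add (by nlinarith)]; ring
  rw [e1, e2, Nat.add_sub_cancel] at h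
  rw [e1]
  apply Nat.eq_of_mul_eq_mul_left (show 0 < n * (n + 1) from Nat.mul_pos (by omega) (by omega))
  linarith

theorem arith3 (q : ℕ) (hq : 9 ≤ q) : (q ^ 2 - 1) / 2 < q ^ 3 - q := by
  have h1 : (q ^ 2 - 1) / 2 ≤ q ^ 2 := (Nat.div_le_self _ _).trans (Nat.sub_le _ _)
  have h2 : q ^ 2 + q < q ^ 3 := by nlinarith [sq_nonneg q]
  omega

def fS (p : F × Bool) : Submodule F (Fin 4 → F) → Submodule F (Fin 4 → F) :=
  projAct F (cGL (mkG 1 p.1 0 (if p.2 then 1 else -1) (by split_ifs <;> simp)))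

theorem span_pt (u v : Fin 4 → F) (h : span F {u} = span F {v}) : ∃ k : F, u = k • v := by
  have : u ∈ span F {v} := by rw [← h]; exact Submodule.mem_span_singleton_self _
  obtain ⟨k, hk⟩ := Submodule.mem_span_singleton.1 this
  exact ⟨k, hk.symm⟩

theorem fS_inj (h3 : (3 : F) = 0) : Function.Injective (fS (F := F)) := by
  rintro ⟨b, s⟩ ⟨b', s'⟩ h
  obtain ⟨d, hd⟩ : ∃ d : F, d = if s then 1 else -1 := ⟨_, rfl⟩
  obtain ⟨d', hd'⟩ : ∃ d' : F, d' = if s' then 1 else -1 := ⟨_, rfl⟩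
  have q1 : d ^ 2 = 1 := by rw [hd]; split_ifs <;> simp
  have q2 : d' ^ 2 = 1 := by rw [hd']; split_ifs <;> simp
  have a1 := congrFun h (span F {cP 0 1})
  have a2 := congrFun h (span F {cP 1 1})
  simp only [fS, projAct_span, Set.image_singleton, cGL_val, cP_vecMul, mkG_val, ← hd, ← hd'] at a1 a2
  obtain ⟨k, a1⟩ := span_pt _ _ a1
  obtain ⟨k', a2⟩ := span_pt _ _ a2
  have b1 := congrFun a1 2
  have b2 := congrFun a1 3
  have b3 := congrFun a2 2
  have b4 := congrFun a2 3
  simp [cP, q1, q2, pow_succ d 2, pow_succ d' 2] at b1 b2 b3 b4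
  have hd0 : d' ≠ 0 := by rintro rfl; simp at q2
  have hk : k = k' := by
    apply mul_right_cancel₀ hd0
    rw [← b2, ← b4]
  subst hk
  have k1 : k = 1 := by linear_combination b1 - b3
  subst k1
  simp at b1 b2
  subst b1
  have : s = s' := by
    rw [b2, hd'] at hd
    have := neg_ne' h3 1 one_ne_zero
    cases s <;> cases s'
    · rfl
    · exact absurd hd.symm this
    · exact absurd hd this
    · rfl
  rw [this]

theorem stabR_eq [Fintype F] (hq : 9 ≤ Fintype.card F) (h3 : (3 : F) = 0) (r : F) (hr : r ≠ 0) :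
    lineStab F (span F ({![0, 1, 0, 0], ![1, 0, r, 0]} : Set (Fin 4 → F))) =
      Set.range (fS (F := F)) := by
  rw [lineStab_eq hq]
  ext f
  constructor
  · rintro ⟨g, hg, rfl⟩
    rw [Set.mem_ofPred_eq, LR_smul h3] at hg
    obtain ⟨hc, h⟩ := hg
    have hd := gl_det g
    have h0 : g 0 0 ≠ 0 := by intro h0; rw [h0, hc] at hd; simp at hd
    have h' : g 1 1 ^ 2 = g 0 0 ^ 2 := mul_left_cancel₀ hr h
    have main : ∀ s : Bool, g 1 1 = (if s then 1 else -1) * g 0 0 →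
        fS (g 0 1 / g 0 0, s) = projAct F (cGL g) := by
      intro s hs
      symm
      refine projAct_smul _ _ (g 0 0 ^ 3) (pow_ne_zero _ h0) ?_
      rw [cGL_val, cGL_val, ← cM_smul, mkG_val]
      congr 1
      ext i j
      fin_cases i <;> fin_cases j <;> simp [hc, hs] <;> field_simp
    rcases sq_eq_sq_iff_eq_or_eq_neg.1 h' with h' | h'
    · exact ⟨_, main true (by simp [h'])⟩
    · exact ⟨_, main false (by simp [h'])⟩
  · rintro ⟨⟨b, s⟩, rfl⟩
    refine ⟨_, ?_, rfl⟩
    rw [Set.mem_ofPred_eq, LR_smul h3, mkG_val]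
    cases s <;> simp

theorem stab1_eq [Fintype F] (hq : 9 ≤ Fintype.card F) (h3 : (3 : F) = 0) :
    lineStab F (span F ({![0, 1, 0, 0], ![0, 0, 1, 1]} : Set (Fin 4 → F))) = {id} := by
  rw [lineStab_eq hq]
  ext f
  rw [Set.mem_singleton_iff]
  constructor
  · rintro ⟨g, hg, rfl⟩
    rw [Set.mem_ofPred_eq, L1_smul h3] at hg
    obtain ⟨hc, hb, h⟩ := hg
    have hd := gl_det g
    have h0 : g 0 0 ≠ 0 := by intro h0; rw [h0, hc] at hd; simp at hd
    have := projAct_smul (cGL g) (cGL 1) (g 0 0 ^ 3) (pow_ne_zero _ h0) (by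
      rw [cGL_val, cGL_val, ← cM_smul]
      congr 1
      ext i j
      fin_cases i <;> fin_cases j <;> simp [hc, hb, h])
    simp only [this]
    funext W
    rw [cGL_one, projAct_one]; rfl
  · rintro rfl
    refine ⟨1, by simp, ?_⟩
    funext W
    simp only [cGL_one, projAct_one]; rfl

end helpers2

theorem stmt_19 (q : ℕ) (F : Type) [Field F] [Fintype F]
    (hcard : Fintype.card F = q) (K : Type) [Field K] [Fintype K] [Algebra F K] (hcardK : Fintype.card K = q ^ 2) (hq : 9 ≤ q) (hq3 : q % 3 = 0)
    (ρ : F) (hρ : ¬ ∃ s : F, s ^ 2 = ρ) :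
    {ℓ : Submodule F (Fin 4 → F) | isEA F K q ℓ} =
      lineOrbit F (Submodule.span F ({![0, 1, 0, 0], ![0, 0, 1, 1]} : Set (Fin 4 → F))) ∪ lineOrbit F (Submodule.span F ({![0, 1, 0, 0], ![1, 0, 1, 0]} : Set (Fin 4 → F))) ∪ lineOrbit F (Submodule.span F ({![0, 1, 0, 0], ![1, 0, ρ, 0]} : Set (Fin 4 → F))) ∧
    lineOrbit F (Submodule.span F ({![0, 1, 0, 0], ![0, 0, 1, 1]} : Set (Fin 4 → F))) ≠ lineOrbit F (Submodule.span F ({![0, 1, 0, 0], ![1, 0, 1, 0]} : Set (Fin 4 → F))) ∧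
    lineOrbit F (Submodule.span F ({![0, 1, 0, 0], ![0, 0, 1, 1]} : Set (Fin 4 → F))) ≠ lineOrbit F (Submodule.span F ({![0, 1, 0, 0], ![1, 0, ρ, 0]} : Set (Fin 4 → F))) ∧
    lineOrbit F (Submodule.span F ({![0, 1, 0, 0], ![1, 0, 1, 0]} : Set (Fin 4 → F))) ≠ lineOrbit F (Submodule.span F ({![0, 1, 0, 0], ![1, 0, ρ, 0]} : Set (Fin 4 → F))) ∧
    (lineOrbit F (Submodule.span F ({![0, 1, 0, 0], ![0, 0, 1, 1]} : Set (Fin 4 → F)))).ncard = q ^ 3 - q ∧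
    (lineOrbit F (Submodule.span F ({![0, 1, 0, 0], ![1, 0, 1, 0]} : Set (Fin 4 → F)))).ncard = (q ^ 2 - 1) / 2 ∧
    (lineOrbit F (Submodule.span F ({![0, 1, 0, 0], ![1, 0, ρ, 0]} : Set (Fin 4 → F)))).ncard = (q ^ 2 - 1) / 2 ∧
    lineStab F (Submodule.span F ({![0, 1, 0, 0], ![0, 0, 1, 1]} : Set (Fin 4 → F))) = {id} ∧
    lineStab F (Submodule.span F ({![0, 1, 0, 0], ![1, 0, 1, 0]} : Set (Fin 4 → F))) = lineStab F (Submodule.span F ({![0, 1, 0, 0], ![1, 0, ρ, 0]} : Set (Fin 4 → F))) ∧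
    (lineStab F (Submodule.span F ({![0, 1, 0, 0], ![1, 0, 1, 0]} : Set (Fin 4 → F)))).ncard = 2 * q ∧
    lineStab F (Submodule.span F ({![0, 1, 0, 0], ![1, 0, 1, 0]} : Set (Fin 4 → F))) =
      {f | ∃ b d : F, (d = 1 ∨ d = -1) ∧ ∃ A : GL (Fin 4) F,
        (↑A : Matrix (Fin 4) (Fin 4) F) =
          !![1, 0, 0, 0;
             0, d, 0, 0;
             0, -(b * d), d ^ 2, 0;
             b ^ 3, b ^ 2 * d, b * d ^ 2, d ^ 3] ∧
        f = projAct F A} := by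
  have hqF : 9 ≤ Fintype.card F := by omega
  have h3 : (3 : F) = 0 := char3 (by omega)
  have hρ0 : ρ ≠ 0 := by rintro rfl; exact hρ ⟨0, by simp⟩
  have c1 := arith1 _ _ hqF (by
    rw [← card_stab1 h3]; exact orbit_card _)
  have c2 : ∀ r : F, r ≠ 0 → (MulAction.orbit (GL (Fin 2) F)
      (Submodule.span F ({![0, 1, 0, 0], ![1, 0, r, 0]} : Set (Fin 4 → F)))).ncard =
        (q ^ 2 - 1) / 2 := by
    intro r hr
    have := arith2 _ _ hqF (by rw [← card_stabR h3 r hr]; exact orbit_card _)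
    rw [hcard] at this
    omega
  rw [hcard] at c1
  have lt := arith3 q hq
  simp only [lineOrbit_eq hqF]
  refine ⟨?_, ?_, ?_, ?_, c1, c2 1 one_ne_zero, c2 ρ hρ0, stab1_eq hqF h3, ?_, ?_, ?_⟩
  · ext ℓ
    rw [Set.mem_ofPred_eq, isEA_iff h3 K q]
    constructor
    · intro h
      obtain ⟨g, hg⟩ := EA'_class h3 ρ hρ ℓ h
      have key : ∀ m, g • ℓ = m → ℓ ∈ MulAction.orbit (GL (Fin 2) F) m := by
        rintro m rfl
        exact ⟨g⁻¹, by simp⟩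
      rcases hg with hg | hg | hg
      · exact Or.inl (Or.inl (key _ hg))
      · exact Or.inl (Or.inr (key _ hg))
      · exact Or.inr (key _ hg)
    · rintro ((⟨g, rfl⟩ | ⟨g, rfl⟩) | ⟨g, rfl⟩)
      · exact EA'_smul h3 g _ EA'_L1
      · exact EA'_smul h3 g _ (EA'_LR 1 one_ne_zero)
      · exact EA'_smul h3 g _ (EA'_LR ρ hρ0)
  · intro h
    have := congrArg Set.ncard h
    rw [c1, c2 1 one_ne_zero] at this
    omega
  · intro h
    have := congrArg Set.ncard h
    rw [c1, c2 ρ hρ0] at this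
    omega
  · intro h
    have hm := MulAction.mem_orbit_self (M := GL (Fin 2) F)
      (Submodule.span F ({![0, 1, 0, 0], ![1, 0, ρ, 0]} : Set (Fin 4 → F)))
    rw [← h] at hm
    obtain ⟨g, hg⟩ := hm
    obtain ⟨hc, h⟩ := (LR_smul h3 g 1 ρ).1 hg
    have hd := gl_det g
    have h0 : g 0 0 ≠ 0 := by intro h0; rw [h0, hc] at hd; simp at hd
    exact hρ ⟨g 1 1 / g 0 0, by field_simp; linear_combination h⟩
  · rw [stabR_eq hqF h3 1 one_ne_zero, stabR_eq hqF h3 ρ hρ0]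
  · rw [stabR_eq hqF h3 1 one_ne_zero, ← Nat.card_coe_set_eq,
      ← Nat.card_congr (Equiv.ofInjective _ (fS_inj h3)), Nat.card_prod,
      Nat.card_eq_fintype_card, hcard]
    simp [mul_comm]
  · rw [stabR_eq hqF h3 1 one_ne_zero]
    have mat : ∀ (b d : F) (hh : (1 : F) * d - b * 0 ≠ 0),
        ((cGL (mkG 1 b 0 d hh) : GL (Fin 4) F) : Matrix (Fin 4) (Fin 4) F) =
          !![1, 0, 0, 0;
             0, d, 0, 0;
             0, -(b * d), d ^ 2, 0;
             b ^ 3, b ^ 2 * d, b * d ^ 2, d ^ 3] := by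
      intro b d hh
      rw [cGL_val, mkG_val]
      ext i j
      fin_cases i <;> fin_cases j <;> simp [cM, h3]
      linear_combination b * d * h3
    ext f
    constructor
    · rintro ⟨⟨b, s⟩, rfl⟩
      refine ⟨b, if s then 1 else -1, by cases s <;> simp, _, mat _ _ _, rfl⟩
    · rintro ⟨b, d, hd, A, hA, rfl⟩
      have main : ∀ s : Bool, d = (if s then 1 else -1) → fS (b, s) = projAct F A := by
        rintro s rfl
        unfold fS
        congr 1
        apply Units.ext
        rw [mat, hA]
      rcases hd with hd | hd
      · exact ⟨_, main true (by simp [hd])⟩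
      · exact ⟨_, main false (by simp [hd])⟩
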